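/- Let V be a finite-dimensional vector space over 𝔽₂, let φ : V → 𝔽₂ be a linear form, and let u ∈ V with φ(u) = 0. Suppose there exists w ∈ V with φ(w) = 1. Let ι_φ denote the left contraction by φ on the exterior algebra ⋀V (the unique φ-antiderivation with ι_φ(ι(x)) = φ(x) for x ∈ V). Then for every z ∈ ⋀V such that ι_φ(z ∧ ι(u)) = 0, there exists z' in the image of the algebra map ⋀(ker φ) → ⋀V induced by the inclusion ker φ ⊆ V such that z' ∧ ι(u) = z ∧ ι(u). -/

import Mathlib

/-!
For `φ : M → R` and `w : M`, the algebra endomorphism of `⋀M` induced by the transvection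
`m ↦ m + φ m • w` is `x ↦ x + w ∧ ι_φ x`; in particular it fixes every `x` with `ι_φ x = 0`.
If `φ w = 1`, then `m ↦ m - φ m • w` takes its values in `ker φ`. Applying the endomorphism `τ`
it induces to `z ∧ y`, where `ι_φ y = 0` and `ι_φ (z ∧ y) = 0`, gives
`z ∧ y = τ (z ∧ y) = τ z ∧ τ y = τ z ∧ y`, and `τ z` comes from `⋀(ker φ)`.
-/

section Transvection

variable {R M : Type*} [CommRing R] [AddCommGroup M] [Module R M]

theorem contractLeft_exteriorAlgebra_ι (φ : Module.Dual R M) (m : M) :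
    CliffordAlgebra.contractLeft φ (ExteriorAlgebra.ι R m) = algebraMap R _ (φ m) :=
  CliffordAlgebra.contractLeft_ι 0 φ m

theorem contractLeft_exteriorAlgebra_ι_mul (φ : Module.Dual R M) (m : M)
    (x : ExteriorAlgebra R M) :
    CliffordAlgebra.contractLeft φ (ExteriorAlgebra.ι R m * x) =
      φ m • x - ExteriorAlgebra.ι R m * CliffordAlgebra.contractLeft φ x :=
  CliffordAlgebra.contractLeft_ι_mul φ m x

theorem exteriorAlgebra_map_transvection (φ : Module.Dual R M) (w : M) (x : ExteriorAlgebra R M) :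
    ExteriorAlgebra.map (LinearMap.transvection φ w) x =
      x + ExteriorAlgebra.ι R w * CliffordAlgebra.contractLeft φ x := by
  induction x using CliffordAlgebra.left_induction with
  | algebraMap r =>
    rw [AlgHom.commutes, CliffordAlgebra.contractLeft_algebraMap, mul_zero, add_zero]
  | add x y hx hy => rw [map_add, map_add, hx, hy, mul_add, add_add_add_comm]
  | ι_mul x m hx =>
    let ι := ExteriorAlgebra.ι R (M := M)
    let d := CliffordAlgebra.contractLeft (Q := (0 : QuadraticForm R M)) φ
    have w_mul_w : ι w * ι w = 0 := ExteriorAlgebra.ι_sq_zero w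
    have m_mul_w : ι m * ι w = -(ι w * ι m) :=
      eq_neg_of_add_eq_zero_left (ExteriorAlgebra.ι_add_mul_swap m w)
    calc ExteriorAlgebra.map (LinearMap.transvection φ w) (ι m * x)
      _ = (ι m + φ m • ι w) * (x + ι w * d x) := by
        rw [map_mul, hx, ExteriorAlgebra.map_apply_ι, LinearMap.transvection.apply, map_add,
          map_smul]
      _ = ι m * x + φ m • (ι w * x) + ι m * ι w * d x + φ m • (ι w * ι w * d x) := by
        simp only [add_mul, mul_add, smul_mul_assoc, mul_assoc]
        abel
      _ = ι m * x + ι w * (φ m • x - ι m * d x) := by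
        rw [w_mul_w, m_mul_w, zero_mul, smul_zero, add_zero, mul_sub, mul_smul_comm, neg_mul,
          mul_assoc, add_assoc, sub_eq_add_neg]
      _ = ι m * x + ι w * d (ι m * x) := by rw [contractLeft_exteriorAlgebra_ι_mul]

theorem exteriorAlgebra_map_transvection_eq_self {φ : Module.Dual R M}
    {x : ExteriorAlgebra R M} (hx : CliffordAlgebra.contractLeft φ x = 0) (w : M) :
    ExteriorAlgebra.map (LinearMap.transvection φ w) x = x := by
  rw [exteriorAlgebra_map_transvection, hx, mul_zero, add_zero]

theorem exteriorAlgebra_range_map_le_range_map_subtype {N : Type*} [AddCommGroup N] [Module R N]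
    {f : M →ₗ[R] N} {P : Submodule R N} (hf : LinearMap.range f ≤ P) :
    (ExteriorAlgebra.map f).range ≤ (ExteriorAlgebra.map P.subtype).range := by
  have factor : f = P.subtype ∘ₗ f.codRestrict P fun m => hf ⟨m, rfl⟩ := rfl
  rw [factor, ← ExteriorAlgebra.map_comp_map]
  exact AlgHom.range_comp_le_range _ _

theorem range_transvection_neg_le_ker {φ : Module.Dual R M} {w : M} (hw : φ w = 1) :
    LinearMap.range (LinearMap.transvection φ (-w)) ≤ LinearMap.ker φ := by
  rintro _ ⟨m, rfl⟩
  simp [LinearMap.transvection.apply, hw]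

theorem exists_mem_range_map_ker_of_contractLeft_eq_zero_general
    {φ : Module.Dual R M} (hφ : ∃ w, φ w = 1) {y z : ExteriorAlgebra R M}
    (hy : CliffordAlgebra.contractLeft φ y = 0)
    (hzy : CliffordAlgebra.contractLeft φ (z * y) = 0) :
    ∃ z' ∈ (ExteriorAlgebra.map (LinearMap.ker φ).subtype).range, z' * y = z * y := by
  obtain ⟨w, hw⟩ := hφ
  let τ := ExteriorAlgebra.map (LinearMap.transvection φ (-w))
  refine ⟨τ z, exteriorAlgebra_range_map_le_range_map_subtype
    (range_transvection_neg_le_ker hw) ⟨z, rfl⟩, ?_⟩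
  calc τ z * y = τ z * τ y := by rw [exteriorAlgebra_map_transvection_eq_self hy]
    _ = τ (z * y) := (map_mul τ z y).symm
    _ = z * y := exteriorAlgebra_map_transvection_eq_self hzy (-w)

end Transvection

/-- Lemma 6.11 of the paper (exterior-algebra content): if `φ u = 0` and `φ` is surjective
(witnessed by `w` with `φ w = 1`), then any `z` with `ι_φ (z ∧ ι u) = 0` can be replaced,
up to multiplication by `ι u`, by an element coming from `⋀(ker φ)`. -/
theorem exists_mem_range_map_ker_of_contractLeft_eq_zero
    (V : Type*) [AddCommGroup V] [Module (ZMod 2) V] [FiniteDimensional (ZMod 2) V]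
    (φ : V →ₗ[ZMod 2] ZMod 2) (u : V) (hu : φ u = 0) (hw : ∃ w : V, φ w = 1) :
    ∀ z : ExteriorAlgebra (ZMod 2) V,
      CliffordAlgebra.contractLeft φ (z * ExteriorAlgebra.ι (ZMod 2) u) = 0 →
      ∃ z' ∈ (ExteriorAlgebra.map (LinearMap.ker φ).subtype).range,
        z' * ExteriorAlgebra.ι (ZMod 2) u = z * ExteriorAlgebra.ι (ZMod 2) u := by
  have hιu : CliffordAlgebra.contractLeft φ (ExteriorAlgebra.ι (ZMod 2) u) = 0 := by
    rw [contractLeft_exteriorAlgebra_ι, hu, map_zero]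
  exact fun _ => exists_mem_range_map_ker_of_contractLeft_eq_zero_general hw hιu
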